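/- Let 1 ≤ j ≤ m−1, let x ∈ [B_j, B_{j+1}), and let i be an index with 2 ≤ i ≤ j. If q_j(i−1) ≤ q_j(i), then p(x, i−1) ≤ p(x, i). -/

import Mathlib

/-!
For `i ≤ j`, the probability of bin `i` is `q_j(i)` times the average, over a random bin `B r` above
`x`, of the probability `(B r - x) / (B r - B i)` that unbiased rounding of `x` to `{B i, B r}` goes
down. Raising `i` brings `B i` closer to `x`, so none of these probabilities decreases, and the
product does not decrease as soon as `q_j(i)` does not.
-/

open Finset

/-- Output distribution of the quantization mechanism: for input `x ∈ [B j, B (j+1))`,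
`outProb m B q j x i` is the probability that the output is bin `B i`. -/
noncomputable def outProb (m : ℕ) (B : ℕ → ℝ) (q : ℕ → ℕ → ℝ) (j : ℕ) (x : ℝ) (i : ℕ) : ℝ :=
  if i ≤ j then
    q j i * ∑ r ∈ Finset.Icc (j + 1) m, q (m - j) (m - r + 1) * ((B r - x) / (B r - B i))
  else
    q (m - j) (m + 1 - i) * ∑ l ∈ Finset.Icc 1 j, q j l * ((x - B l) / (B i - B l))

section WeightedRoundDown

variable {ι K : Type*} [Field K]

/-- The `w`-weighted sum, over upper endpoints `b r` with `r ∈ s`, of the probability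
`(b r - x) / (b r - a)` that unbiased randomized rounding of `x` to `{a, b r}` returns `a`. It is
the factor multiplying `q j i` in the lower branch of `outProb`; the weights need not sum to `1`. -/
def weightedRoundDown (s : Finset ι) (w b : ι → K) (x a : K) : K :=
  ∑ r ∈ s, w r * ((b r - x) / (b r - a))

variable [LinearOrder K] [IsStrictOrderedRing K] {s : Finset ι} {w b : ι → K} {x : K}

theorem weightedRoundDown_nonneg {a : K} (hw : ∀ r ∈ s, 0 ≤ w r) (hx : ∀ r ∈ s, x ≤ b r)
    (ha : ∀ r ∈ s, a ≤ b r) : 0 ≤ weightedRoundDown s w b x a :=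
  sum_nonneg fun r hr =>
    mul_nonneg (hw r hr) (div_nonneg (sub_nonneg.2 (hx r hr)) (sub_nonneg.2 (ha r hr)))

theorem weightedRoundDown_monotoneOn (hw : ∀ r ∈ s, 0 ≤ w r) (hx : ∀ r ∈ s, x ≤ b r) :
    MonotoneOn (weightedRoundDown s w b x) {a | ∀ r ∈ s, a < b r} := by
  intro a _ a' ha' haa'
  refine sum_le_sum fun r hr => mul_le_mul_of_nonneg_left ?_ (hw r hr)
  exact div_le_div_of_nonneg_left (sub_nonneg.2 (hx r hr)) (sub_pos.2 (ha' r hr))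
    (sub_le_sub_left haa' (b r))

end WeightedRoundDown

theorem outProb_of_le {m j i : ℕ} (B : ℕ → ℝ) (q : ℕ → ℕ → ℝ) (x : ℝ) (hij : i ≤ j) :
    outProb m B q j x i =
      q j i * weightedRoundDown (Icc (j + 1) m) (fun r => q (m - j) (m - r + 1)) B x (B i) :=
  if_pos hij

theorem output_prob_monotone_in_index_general {m : ℕ} {B : ℕ → ℝ}
    (hB : StrictMonoOn B (Set.Icc 1 m)) {q : ℕ → ℕ → ℝ}
    (hq_nonneg : ∀ n ∈ Icc 1 m, ∀ k ∈ Icc 1 n, 0 ≤ q n k)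
    {j : ℕ} (hjm : j < m) {x : ℝ} (hx : x ≤ B (j + 1))
    {i₁ i₂ : ℕ} (hi₁ : 1 ≤ i₁) (hi : i₁ ≤ i₂) (hi₂ : i₂ ≤ j) (hq : q j i₁ ≤ q j i₂) :
    outProb m B q j x i₁ ≤ outProb m B q j x i₂ := by
  have hq_upper : ∀ r ∈ Icc (j + 1) m, 0 ≤ q (m - j) (m - r + 1) := by
    intro r hr
    rw [mem_Icc] at hr
    exact hq_nonneg _ (mem_Icc.2 (by lia)) _ (mem_Icc.2 (by lia))
  have hx_upper : ∀ r ∈ Icc (j + 1) m, x ≤ B r := by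
    intro r hr
    rw [mem_Icc] at hr
    exact hx.trans (hB.monotoneOn ⟨by lia, hjm⟩ ⟨by lia, hr.2⟩ hr.1)
  have hB_upper : ∀ k, 1 ≤ k → k ≤ j → ∀ r ∈ Icc (j + 1) m, B k < B r := by
    intro k hk hkj r hr
    rw [mem_Icc] at hr
    exact hB ⟨hk, by lia⟩ ⟨by lia, hr.2⟩ (by lia)
  have hB_lower := hB_upper i₁ hi₁ (hi.trans hi₂)
  rw [outProb_of_le B q x (hi.trans hi₂), outProb_of_le B q x hi₂]
  refine mul_le_mul hq ?_ ?_ (hq_nonneg j (mem_Icc.2 (by lia)) i₂ (mem_Icc.2 (by lia)))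
  · exact weightedRoundDown_monotoneOn hq_upper hx_upper hB_lower (hB_upper i₂ (by lia) hi₂)
      (hB.monotoneOn ⟨hi₁, by lia⟩ ⟨by lia, by lia⟩ hi)
  · exact weightedRoundDown_nonneg hq_upper hx_upper fun r hr => (hB_lower r hr).le

/-- For `x ∈ [B j, B (j+1))` and `2 ≤ i ≤ j`: if `q_j(i−1) ≤ q_j(i)` then
`p(x, i−1) ≤ p(x, i)`. -/
theorem output_prob_monotone_in_index
    (m : ℕ) (hm : 2 ≤ m)
    (B : ℕ → ℝ)
    (hB : ∀ i j : ℕ, 1 ≤ i → i < j → j ≤ m → B i < B j)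
    (q : ℕ → ℕ → ℝ)
    (hq_nonneg : ∀ n i : ℕ, 1 ≤ n → n ≤ m → 0 ≤ q n i)
    (hq_sum : ∀ n : ℕ, 1 ≤ n → n ≤ m → ∑ i ∈ Finset.Icc 1 n, q n i = 1)
    (j : ℕ) (hj1 : 1 ≤ j) (hj2 : j ≤ m - 1)
    (x : ℝ) (hx1 : B j ≤ x) (hx2 : x < B (j + 1))
    (i : ℕ) (hi2 : 2 ≤ i) (hij : i ≤ j)
    (hq : q j (i - 1) ≤ q j i) :
    outProb m B q j x (i - 1) ≤ outProb m B q j x i := by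
  have hB_mono : StrictMonoOn B (Set.Icc 1 m) := fun k hk l hl hkl => hB k l hk.1 hkl hl.2
  exact output_prob_monotone_in_index_general hB_mono
    (fun n hn k _ => hq_nonneg n k (mem_Icc.1 hn).1 (mem_Icc.1 hn).2)
    (by lia) hx2.le (by lia) (Nat.sub_le i 1) hij hq
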